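/- arXiv:2007.12742 — 3 statements merged into one kernel-verified Lean document; each statement's English description precedes it below -/
import Mathlib

section
/- Let m ∈ ℕ and let g(s) = Σ_{j=0}^{m} a_j s^j be a polynomial of degree at most m with real coefficients, and let X be a standard Gaussian random variable. Then 𝔻g(X) ≥ (1/m) 𝔼|g'(X)|², where 𝔻g(X) := 𝔼(g(X) − 𝔼g(X))² is the variance of g(X). -/
open MeasureTheory ProbabilityTheory

/-!
Stein's identity (integration by parts against the Gaussian density) makes `∂* = v⁻¹ (X - μ) - ∂`
the adjoint of `∂` on polynomials in `L²(N(μ, v))`, and `[∂, ∂*] = v⁻¹`. This commutation relation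
replaces the Hermite expansion: it gives `‖∂*∂p‖² = v⁻¹ ‖∂p‖² + ‖∂²p‖²`, which is at most
`m v⁻¹ ‖∂p‖²` for `deg p ≤ m` by induction applied to `∂p`, and Cauchy–Schwarz in
`‖∂p‖² = ⟪p, ∂*∂p⟫` turns this into `‖∂p‖² ≤ m v⁻¹ ‖p‖²`. The variance bound is the case
`p = g - 𝔼 g`.
-/

open Polynomial
open scoped NNReal

section CommutationRelation

variable {R M : Type*} [CommRing R] [AddCommGroup M] [Module R M]
  {B : LinearMap.BilinForm R M} {D D' : Module.End R M} {c : R}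

lemma apply_adjoint_self_of_lie_eq_smul_one (hadj : LinearMap.IsAdjointPair B B D D')
    (hlie : ⁅D, D'⁆ = c • 1) (hB : B.IsSymm) (x : M) :
    B (D' x) (D' x) = c * B x x + B (D x) (D x) := by
  have hDD' : D (D' x) = c • x + D' (D x) := by
    simpa [Ring.lie_def, sub_eq_iff_eq_add] using LinearMap.congr_fun hlie x
  calc B (D' x) (D' x) = B (D (D' x)) x := (hadj _ _).symm
    _ = c * B x x + B (D' (D x)) x := by simp [hDD']
    _ = c * B x x + B (D x) (D x) := by rw [hB.eq (D' _), ← hadj]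

variable [LinearOrder R] [IsStrictOrderedRing R]

theorem apply_map_self_le_of_lie_eq_smul_one (hB : B.IsPosSemidef)
    (hadj : LinearMap.IsAdjointPair B B D D') (hlie : ⁅D, D'⁆ = c • 1) (hc : 0 ≤ c) {m : ℕ} {x : M}
    (hx : (D ^ (m + 1)) x = 0) :
    B (D x) (D x) ≤ m * c * B x x := by
  induction m generalizing x with
  | zero => simp_all
  | succ m ih =>
    have hD'D : B (D' (D x)) (D' (D x)) ≤ (m + 1) * c * B (D x) (D x) := by
      have hDDx := ih (x := D x) (by rwa [pow_succ] at hx)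
      rw [apply_adjoint_self_of_lie_eq_smul_one hadj hlie hB.isSymm]
      linarith
    have hCS : B (D x) (D x) * B (D x) (D x) ≤ (m + 1) * c * B x x * B (D x) (D x) :=
      calc B (D x) (D x) * B (D x) (D x) = B x (D' (D x)) ^ 2 := by rw [hadj, sq]
        _ ≤ B x x * B (D' (D x)) (D' (D x)) :=
          B.apply_sq_le_of_symm hB.nonneg ⟨hB.eq⟩ _ _
        _ ≤ B x x * ((m + 1) * c * B (D x) (D x)) := by gcongr; exact hB.nonneg x
        _ = (m + 1) * c * B x x * B (D x) (D x) := by ring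
    push_cast
    rcases (hB.nonneg (D x)).eq_or_lt with hDx | hDx
    · have hxx := hB.nonneg x
      rw [← hDx]
      positivity
    · exact le_of_mul_le_mul_right hCS hDx

end CommutationRelation

section Stein

variable {E : Type*} [NormedAddCommGroup E] [NormedSpace ℝ E] {μ : ℝ} {v : ℝ≥0}

lemma integrable_gaussianReal_iff (hv : v ≠ 0) {f : ℝ → E} :
    Integrable f (gaussianReal μ v) ↔ Integrable (fun x ↦ gaussianPDFReal μ v x • f x) := by
  rw [gaussianReal_of_var_ne_zero μ hv, integrable_withDensity_iff_integrable_smul'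
    (measurable_gaussianPDF μ v) (.of_forall fun _ ↦ gaussianPDF_lt_top)]
  simp only [toReal_gaussianPDF]

lemma hasDerivAt_gaussianPDFReal (μ : ℝ) (v : ℝ≥0) (x : ℝ) :
    HasDerivAt (gaussianPDFReal μ v) (-((v : ℝ)⁻¹ * (x - μ)) * gaussianPDFReal μ v x) x := by
  have hexponent :
      HasDerivAt (fun y ↦ -(y - μ) ^ 2 / (2 * (v : ℝ))) (-((v : ℝ)⁻¹ * (x - μ))) x := by
    refine ((((hasDerivAt_id x).sub_const μ).pow 2).neg.div_const (2 * (v : ℝ))).congr_deriv ?_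
    simp only [Nat.cast_ofNat, id_eq, Nat.add_one_sub_one, pow_one, mul_one]
    field_simp
  rw [gaussianPDFReal_def]
  exact (hexponent.exp.const_mul _).congr_deriv (by ring)

theorem integral_gaussianReal_of_hasDerivAt (hv : v ≠ 0) {f f' : ℝ → E}
    (hderiv : ∀ x, HasDerivAt f (f' x) x) (hf : Integrable f (gaussianReal μ v))
    (hf' : Integrable f' (gaussianReal μ v))
    (hxf : Integrable (fun x ↦ (x - μ) • f x) (gaussianReal μ v)) :
    ∫ x, f' x ∂gaussianReal μ v = (v : ℝ)⁻¹ • ∫ x, (x - μ) • f x ∂gaussianReal μ v := by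
  have hxf' := hxf.fun_smul (v : ℝ)⁻¹
  rw [← integral_smul, ← sub_eq_zero, ← integral_sub hf' hxf',
    integral_gaussianReal_eq_integral_smul hv]
  refine integral_eq_zero_of_hasDerivAt_of_integrable
    (f := fun x ↦ gaussianPDFReal μ v x • f x) (fun x ↦ ?_)
    ((integrable_gaussianReal_iff hv).mp (hf'.sub hxf')) ((integrable_gaussianReal_iff hv).mp hf)
  refine ((hasDerivAt_gaussianPDFReal μ v x).smul (hderiv x)).congr_deriv ?_
  module

end Stein

section GaussianForm

lemma integrable_eval_of_integrable_pow {ν : Measure ℝ}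
    (hν : ∀ n : ℕ, Integrable (fun x ↦ x ^ n) ν) (p : ℝ[X]) : Integrable (fun x ↦ p.eval x) ν := by
  simp only [eval_eq_sum_range]
  exact integrable_finsetSum _ fun n _ ↦ (hν n).const_mul _

variable (μ : ℝ) (v : ℝ≥0)

lemma integrable_eval_gaussianReal (p : ℝ[X]) :
    Integrable (fun x ↦ p.eval x) (gaussianReal μ v) := by
  refine integrable_eval_of_integrable_pow (fun n ↦ ?_) p
  have hmoment := (memLp_id_gaussianReal (μ := μ) (v := v) (n : ℝ≥0)).integrable_norm_pow'
  exact hmoment.mono' (by fun_prop) (by simp)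

/-- The expectation `p ↦ 𝔼 p(Y)` of real polynomials in `Y ∼ N(μ, v)`, as a linear functional. -/
noncomputable def gaussianExpectation : ℝ[X] →ₗ[ℝ] ℝ where
  toFun p := ∫ x, p.eval x ∂gaussianReal μ v
  map_add' p q := by
    simpa only [eval_add] using
      integral_add (integrable_eval_gaussianReal μ v p) (integrable_eval_gaussianReal μ v q)
  map_smul' c p := by simpa only [eval_smul, RingHom.id_apply] using integral_smul c _

lemma gaussianExpectation_apply (p : ℝ[X]) :
    gaussianExpectation μ v p = ∫ x, p.eval x ∂gaussianReal μ v := rfl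

/-- The semi-inner product `(p, q) ↦ 𝔼 p(Y) q(Y)` on real polynomials, where `Y ∼ N(μ, v)`. It is
only positive semidefinite, as `v = 0` is allowed. -/
noncomputable def gaussianForm : LinearMap.BilinForm ℝ ℝ[X] :=
  (LinearMap.mul ℝ ℝ[X]).compr₂ (gaussianExpectation μ v)

lemma gaussianForm_apply (p q : ℝ[X]) :
    gaussianForm μ v p q = gaussianExpectation μ v (p * q) := rfl

lemma gaussianForm_self (p : ℝ[X]) :
    gaussianForm μ v p p = ∫ x, p.eval x ^ 2 ∂gaussianReal μ v := by
  simp only [gaussianForm_apply, gaussianExpectation_apply, eval_mul, sq]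

lemma isPosSemidef_gaussianForm : (gaussianForm μ v).IsPosSemidef where
  eq p q := by simp only [gaussianForm_apply, mul_comm p q]
  nonneg p := by
    rw [gaussianForm_self]
    exact integral_nonneg fun x ↦ sq_nonneg _

/-- The operator `p ↦ v⁻¹ (X - μ) p - p'` on real polynomials, which is the adjoint of
differentiation for `gaussianForm μ v` if `v ≠ 0`; for `μ = 0` and `v = 1` it raises the Hermite
polynomial of degree `n` to that of degree `n + 1`. -/
noncomputable def gaussianRaising : Module.End ℝ ℝ[X] :=
  (v : ℝ)⁻¹ • LinearMap.mulLeft ℝ (X - C μ) - derivative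

lemma gaussianRaising_apply (p : ℝ[X]) :
    gaussianRaising μ v p = (v : ℝ)⁻¹ • ((X - C μ) * p) - derivative p := rfl

lemma lie_derivative_gaussianRaising :
    ⁅(derivative : Module.End ℝ ℝ[X]), gaussianRaising μ v⁆ = (v : ℝ)⁻¹ • 1 :=
  LinearMap.ext fun p ↦ by simp [Ring.lie_def, gaussianRaising_apply]

variable {v}

lemma gaussianExpectation_derivative (hv : v ≠ 0) (p : ℝ[X]) :
    gaussianExpectation μ v (derivative p) =
      (v : ℝ)⁻¹ * gaussianExpectation μ v ((X - C μ) * p) := by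
  have hmul (x : ℝ) : ((X - C μ) * p).eval x = (x - μ) • p.eval x := by simp
  simp only [gaussianExpectation_apply, hmul]
  exact integral_gaussianReal_of_hasDerivAt hv p.hasDerivAt (integrable_eval_gaussianReal μ v _)
    (integrable_eval_gaussianReal μ v _)
    ((integrable_eval_gaussianReal μ v ((X - C μ) * p)).congr (.of_forall hmul))

lemma isAdjointPair_derivative_gaussianRaising (hv : v ≠ 0) :
    LinearMap.IsAdjointPair (gaussianForm μ v) (gaussianForm μ v) derivative
      (gaussianRaising μ v) := by
  intro p q
  have hraising : p * gaussianRaising μ v q =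
      (v : ℝ)⁻¹ • ((X - C μ) * (p * q)) - p * derivative q := by
    rw [gaussianRaising_apply, mul_sub, mul_smul_comm, mul_left_comm]
  have hstein := gaussianExpectation_derivative μ hv (p * q)
  rw [derivative_mul, map_add] at hstein
  rw [gaussianForm_apply, gaussianForm_apply, hraising, map_sub, map_smul, smul_eq_mul, ← hstein,
    add_sub_cancel_right]

end GaussianForm

theorem variance_ge_deriv_sq_general (μ : ℝ) (v : ℝ≥0) {m : ℕ} {g : ℝ[X]}
    (hg : g.natDegree ≤ m) :
    v * ∫ x, (derivative g).eval x ^ 2 ∂gaussianReal μ v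
      ≤ m * Var[fun x ↦ g.eval x; gaussianReal μ v] := by
  rcases eq_or_ne v 0 with rfl | hv
  · simp [variance_dirac]
  let p := g - C (∫ x, g.eval x ∂gaussianReal μ v)
  have hdp : derivative p = derivative g := by simp [p]
  have hvar : Var[fun x ↦ g.eval x; gaussianReal μ v] = gaussianForm μ v p p := by
    rw [variance_eq_integral (by fun_prop), gaussianForm_self]
    simp [p]
  have hiter : (derivative ^ (m + 1)) p = 0 := by
    rw [Module.End.pow_apply]
    exact iterate_derivative_eq_zero (by simpa [p, Nat.lt_succ_iff] using hg)
  have hform := apply_map_self_le_of_lie_eq_smul_one (isPosSemidef_gaussianForm μ v)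
    (isAdjointPair_derivative_gaussianRaising μ hv) (lie_derivative_gaussianRaising μ v)
    (by positivity) hiter
  rw [hdp, gaussianForm_self, ← hvar] at hform
  calc v * ∫ x, (derivative g).eval x ^ 2 ∂gaussianReal μ v
    _ ≤ v * (m * (v : ℝ)⁻¹ * Var[fun x ↦ g.eval x; gaussianReal μ v]) := by gcongr
    _ = m * Var[fun x ↦ g.eval x; gaussianReal μ v] := by field_simp

/-- Poincaré-type bound via the Hermite expansion: for a polynomial `g` of degree at most `m`
and `X` standard Gaussian, `𝔻g(X) ≥ (1/m) 𝔼|g'(X)|²`. -/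
theorem variance_ge_deriv_sq (m : ℕ) (hm : 1 ≤ m) (g : Polynomial ℝ)
    (hg : g.natDegree ≤ m) :
    (1 / m : ℝ) * ∫ x, (Polynomial.eval x (Polynomial.derivative g)) ^ 2 ∂(gaussianReal 0 1)
      ≤ variance (fun x => Polynomial.eval x g) (gaussianReal 0 1) := by
  have hm' : (0 : ℝ) < m := by exact_mod_cast hm
  rw [one_div, inv_mul_le_iff₀ hm']
  simpa using variance_ge_deriv_sq_general 0 1 hg
end

section
/- Let m ∈ ℕ. There exists a constant c₂(m) > 0 depending only on m such that for every polynomial g(s) = Σ_{j=0}^{m} a_j s^j of degree at most m with real coefficients and a standard Gaussian random variable X, one has 𝔻g(X) ≥ c₂(m) max_{1 ≤ j ≤ m} |a_j|². -/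
open MeasureTheory ProbabilityTheory

/-!
Centring a square-integrable variable turns its variance into a squared `L²` norm. If
`X₁, …, Xₙ` and `1` are linearly independent modulo almost sure equality, then
`a ↦ ∑ aᵢ (Xᵢ - 𝔼Xᵢ)` is an injective linear map from a finite-dimensional space to `L²`, hence
bounded below, which bounds `Var(∑ aᵢXᵢ)` below by a multiple of `‖a‖²`. The powers `X, …, X^m`
satisfy this as soon as the law of `X` is not carried by `m` points, since a nonzero polynomial of
degree at most `m` has at most `m` roots.
-/

section CenteredVariables

open scoped RealInnerProductSpace

variable {Ω : Type*} {mΩ : MeasurableSpace Ω} {P : Measure Ω} [IsFiniteMeasure P]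

/-- The centred random variable `X - 𝔼X` as a vector of the Hilbert space `L²(P)`, so that
covariances become inner products. -/
noncomputable def centeredLp {X : Ω → ℝ} (hX : MemLp X 2 P) : Lp ℝ 2 P :=
  (hX.sub (memLp_const P[X])).toLp

lemma inner_centeredLp {X Y : Ω → ℝ} (hX : MemLp X 2 P) (hY : MemLp Y 2 P) :
    ⟪centeredLp hX, centeredLp hY⟫ = cov[X, Y; P] := by
  rw [L2.inner_def, covariance]
  refine integral_congr_ae ?_
  filter_upwards [(hX.sub (memLp_const P[X])).coeFn_toLp,
    (hY.sub (memLp_const P[Y])).coeFn_toLp] with ω hXω hYω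
  simp [centeredLp, hXω, hYω, mul_comm]

variable {ι : Type*} [Fintype ι] {X : ι → Ω → ℝ}

lemma norm_sq_sum_smul_centeredLp (hX : ∀ i, MemLp (X i) 2 P) (a : ι → ℝ) :
    ‖∑ i, a i • centeredLp (hX i)‖ ^ 2 = Var[fun ω ↦ ∑ i, a i * X i ω; P] := by
  rw [variance_fun_sum fun i ↦ (hX i).const_mul (a i), ← real_inner_self_eq_norm_sq]
  simp_rw [sum_inner, inner_sum, real_inner_smul_left, real_inner_smul_right, inner_centeredLp,
    covariance_const_mul_left, covariance_const_mul_right]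

theorem exists_pos_mul_norm_sq_le_variance_sum (hX : ∀ i, MemLp (X i) 2 P)
    (hindep : ∀ (a : ι → ℝ) (c : ℝ), (∀ᵐ ω ∂P, ∑ i, a i * X i ω = c) → a = 0) :
    ∃ c : ℝ, 0 < c ∧ ∀ a : ι → ℝ, c * ‖a‖ ^ 2 ≤ Var[fun ω ↦ ∑ i, a i * X i ω; P] := by
  let T : (ι → ℝ) →ₗ[ℝ] Lp ℝ 2 P := Fintype.linearCombination ℝ fun i ↦ centeredLp (hX i)
  have norm_sq_T (a : ι → ℝ) : ‖T a‖ ^ 2 = Var[fun ω ↦ ∑ i, a i * X i ω; P] :=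
    norm_sq_sum_smul_centeredLp hX a
  have ker_T : T.ker = ⊥ := by
    refine LinearMap.ker_eq_bot'.mpr fun a ha ↦ ?_
    have variance_eq_zero : Var[fun ω ↦ ∑ i, a i * X i ω; P] = 0 := by
      rw [← norm_sq_T, ha, norm_zero, zero_pow two_ne_zero]
    exact hindep a _ (ae_eq_integral_of_variance_eq_zero
      (memLp_finsetSum _ fun i _ ↦ (hX i).const_mul (a i)) variance_eq_zero)
  obtain ⟨K, hK, hT⟩ := T.exists_antilipschitzWith ker_T
  refine ⟨((K : ℝ) ^ 2)⁻¹, by positivity, fun a ↦ ?_⟩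
  rw [← norm_sq_T, inv_mul_le_iff₀ (by positivity), ← mul_pow]
  gcongr
  exact hT.le_mul_norm (map_zero T) a

end CenteredVariables

section AlmostSureRoots

variable {R : Type*} [CommRing R] [IsDomain R] [MeasurableSpace R] {μ : Measure R} {m : ℕ}

lemma eq_zero_of_ae_eval_eq_zero (hμ : ∀ s : Finset R, s.card ≤ m → ∃ᵐ x ∂μ, x ∉ s)
    {p : Polynomial R} (hp : p.natDegree ≤ m) (hroot : ∀ᵐ x ∂μ, p.eval x = 0) : p = 0 := by
  classical
  by_contra hp0
  have hcard : p.roots.toFinset.card ≤ m :=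
    (Multiset.toFinset_card_le _).trans (p.card_roots'.trans hp)
  obtain ⟨x, hx, hpx⟩ := ((hμ _ hcard).and_eventually hroot).exists
  exact hx (by simpa [hp0] using hpx)

lemma eq_zero_of_ae_sum_mul_pow_eq (hμ : ∀ s : Finset R, s.card ≤ m → ∃ᵐ x ∂μ, x ∉ s)
    (a : Finset.Icc 1 m → R) (c : R) (hconst : ∀ᵐ x ∂μ, ∑ j, a j * x ^ (j : ℕ) = c) :
    a = 0 := by
  let p : Polynomial R :=
    (∑ j : Finset.Icc 1 m, Polynomial.monomial (j : ℕ) (a j)) - Polynomial.C c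
  have natDegree_p : p.natDegree ≤ m := by
    rw [Polynomial.natDegree_sub_C]
    exact Polynomial.natDegree_sum_le_of_forall_le _ _ fun j _ ↦
      (Polynomial.natDegree_monomial_le _).trans (Finset.mem_Icc.mp j.2).2
  have p_eq_zero : p = 0 := eq_zero_of_ae_eval_eq_zero hμ natDegree_p <| by
    filter_upwards [hconst] with x hx
    simpa [p, Polynomial.eval_finsetSum, sub_eq_zero] using hx
  ext j
  have hj : (j : ℕ) ≠ 0 := Nat.one_le_iff_ne_zero.mp (Finset.mem_Icc.mp j.2).1
  have coeff_p : p.coeff j = a j := by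
    simp [p, Polynomial.coeff_monomial, Polynomial.coeff_C, hj]
  simpa [p_eq_zero] using coeff_p.symm

end AlmostSureRoots

lemma eval_eq_coeff_zero_add_sum_Icc {R : Type*} [Semiring R] {m : ℕ} {g : Polynomial R}
    (hg : g.natDegree ≤ m) (x : R) :
    g.eval x = g.coeff 0 + ∑ j : Finset.Icc 1 m, g.coeff j * x ^ (j : ℕ) := by
  rw [Polynomial.eval_eq_sum_range' (Nat.lt_succ_of_le hg), Finset.range_eq_Ico,
    Finset.sum_eq_sum_Ico_succ_bot m.succ_pos,
    Finset.sum_coe_sort (Finset.Icc 1 m) fun j ↦ g.coeff j * x ^ j]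
  simp [Finset.Ico_add_one_right_eq_Icc]

lemma norm_restrict_eq_sup' {ι E : Type*} [SeminormedAddGroup E] {s : Finset ι}
    (hs : s.Nonempty) (f : ι → E) : ‖s.restrict f‖ = s.sup' hs fun i ↦ ‖f i‖ := by
  have : Nonempty s := hs.to_subtype
  refine le_antisymm ((pi_norm_le_iff_of_nonempty _).mpr fun i ↦ ?_)
    (Finset.sup'_le _ _ fun i hi ↦ norm_le_pi_norm (s.restrict f) ⟨i, hi⟩)
  exact Finset.le_sup' (fun i ↦ ‖f i‖) i.2

open scoped ENNReal in
lemma memLp_pow_of_le {Ω 𝕜 : Type*} {mΩ : MeasurableSpace Ω} {P : Measure Ω}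
    [IsFiniteMeasure P] [NormedDivisionRing 𝕜] {X : Ω → 𝕜} {p : ℝ≥0∞} {j m : ℕ}
    (hX : MemLp X (p * m) P) (hjm : j ≤ m) :
    MemLp (fun ω ↦ X ω ^ j) p P := by
  obtain rfl | hj := eq_or_ne j 0
  · simpa using memLp_const 1
  have hX' : MemLp X (p * j) P := hX.mono_exponent (by gcongr)
  have hnorm := hX'.norm_rpow_div j
  rw [ENNReal.mul_div_cancel_right (by simpa) (by simp)] at hnorm
  refine (memLp_norm_iff (hX'.aestronglyMeasurable.pow j)).mp ?_
  simpa using hnorm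

theorem variance_ge_max_coeff_general (m : ℕ) (hm : 1 ≤ m) (μ : Measure ℝ)
    [IsProbabilityMeasure μ] (hmoment : MemLp id (2 * m) μ)
    (hμ : ∀ s : Finset ℝ, s.card ≤ m → ∃ᵐ x ∂μ, x ∉ s) :
    ∃ c : ℝ, 0 < c ∧
      ∀ g : Polynomial ℝ, g.natDegree ≤ m →
        c * ((Finset.Icc 1 m).sup' (Finset.nonempty_Icc.mpr hm) (fun j => |g.coeff j|)) ^ 2
          ≤ variance (fun x => Polynomial.eval x g) μ := by
  have memLp_pow (j : Finset.Icc 1 m) : MemLp (fun x : ℝ ↦ x ^ (j : ℕ)) 2 μ :=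
    memLp_pow_of_le hmoment (Finset.mem_Icc.mp j.2).2
  obtain ⟨c, hc, hbound⟩ :=
    exists_pos_mul_norm_sq_le_variance_sum memLp_pow (eq_zero_of_ae_sum_mul_pow_eq hμ)
  refine ⟨c, hc, fun g hg ↦ ?_⟩
  simp_rw [← Real.norm_eq_abs, ← norm_restrict_eq_sup', eval_eq_coeff_zero_add_sum_Icc hg]
  rw [variance_const_add (by fun_prop)]
  exact hbound _

/-- For every `m ≥ 1` there is `c₂(m) > 0` such that for every polynomial
`g(s) = Σ_{j=0}^m a_j s^j` of degree at most `m` and `X` standard Gaussian,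
`𝔻g(X) ≥ c₂(m) max_{1 ≤ j ≤ m} |a_j|²`. -/
theorem variance_ge_max_coeff (m : ℕ) (hm : 1 ≤ m) :
    ∃ c : ℝ, 0 < c ∧
      ∀ g : Polynomial ℝ, g.natDegree ≤ m →
        c * ((Finset.Icc 1 m).sup' (Finset.nonempty_Icc.mpr hm)
              (fun j => |g.coeff j|)) ^ 2
          ≤ variance (fun x => Polynomial.eval x g) (gaussianReal 0 1) := by
  have : NullSingletonClass (gaussianReal 0 1) := nullSingletonClass_gaussianReal one_ne_zero
  exact variance_ge_max_coeff_general m hm _ (memLp_id_gaussianReal' _ (by finiteness))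
    fun s _ ↦ (s.countable_toSet.ae_notMem _).frequently
end

section
/- Let m, d ∈ ℕ with m ≤ d and let A, B > 0. Let h : (0,∞) → [0,∞) be a function such that (i) h(t) ≤ 2 h(ε) + A t^{1/m} [ |ln ε|^{d−m} + 1 ] for all t > 0 and all ε ∈ (0, e^{−1}], and (ii) h(t) ≤ B t^{1/d} for all t > 0. Then there exists a constant C > 0 depending only on m, d and A such that h(t) ≤ C t^{1/m} [ |ln t|^{d−m} + 1 ] for all t ∈ (0, e^{−1}]. -/
/-!
Fix a ratio `q ∈ (0, 1]` so small that `c q^α < 1` and `c q^β < 1`. Applying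
`h t ≤ c h ε + A t^α (|log ε|^n + 1)` to consecutive terms of `tₖ = t qᵏ` and iterating gives
`h t ≤ c^N h t_N + A ∑_{k<N} c^k tₖ^α (|log tₖ₊₁|^n + 1)`. Because `|log t| ≥ 1`, the logarithmic
weight grows only polynomially in `k` relative to `|log t|^n + 1`, so the sum is dominated by
`t^α (|log t|^n + 1)` times the convergent series `∑ (1 + (k + 1) |log q|)^n (c q^α)^k`. The
remainder is at most `B t^β (c q^β)^N`, which vanishes in the limit; hence `B` does not enter the
constant. The choice `c = 2`, `α = 1/m`, `β = 1/d`, `q = 2^(-2d)` is the dyadic one.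
-/

open Filter Set Topology

section Iteration

variable {R : Type*} [Semiring R] [PartialOrder R] [IsOrderedRing R] {a b : ℕ → R} {c : R}

lemma le_pow_mul_add_sum_of_le_mul_succ_add (hc : 0 ≤ c) (h : ∀ k, a k ≤ c * a (k + 1) + b k)
    (N : ℕ) : a 0 ≤ c ^ N * a N + ∑ k ∈ Finset.range N, c ^ k * b k := by
  induction N with
  | zero => simp
  | succ N ih =>
    calc a 0 ≤ c ^ N * a N + ∑ k ∈ Finset.range N, c ^ k * b k := ih
      _ ≤ c ^ N * (c * a (N + 1) + b N) + ∑ k ∈ Finset.range N, c ^ k * b k := by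
        gcongr
        exact h N
      _ = c ^ (N + 1) * a (N + 1) + ∑ k ∈ Finset.range (N + 1), c ^ k * b k := by
        rw [Finset.sum_range_succ, mul_add, pow_succ, mul_assoc]
        abel

lemma le_of_le_mul_succ_add_of_hasSum [TopologicalSpace R] [ContinuousAdd R]
    [OrderClosedTopology R] {u : ℕ → R} {S : R} (hc : 0 ≤ c)
    (h : ∀ k, a k ≤ c * a (k + 1) + b k) (hu : ∀ N, c ^ N * a N ≤ u N)
    (hu_lim : Tendsto u atTop (𝓝 0)) (hS : HasSum (fun k ↦ c ^ k * b k) S) : a 0 ≤ S := by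
  have hlim : Tendsto (fun N ↦ u N + ∑ k ∈ Finset.range N, c ^ k * b k) atTop (𝓝 S) := by
    simpa only [zero_add] using hu_lim.add hS.tendsto_sum_nat
  refine ge_of_tendsto' hlim fun N ↦ (le_pow_mul_add_sum_of_le_mul_succ_add hc h N).trans ?_
  gcongr
  exact hu N

end Iteration

lemma summable_add_mul_pow_mul_geometric {R : Type*} [NormedCommRing R]
    [HasSummableGeomSeries R] {r : R} (hr : ‖r‖ < 1) (x y : R) (n : ℕ) :
    Summable fun k : ℕ ↦ (x + k * y) ^ n * r ^ k := by
  simp only [add_comm x, add_pow, mul_pow, Finset.sum_mul]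
  refine summable_sum fun j _ ↦ ?_
  refine ((summable_pow_mul_geometric_of_norm_lt_one j hr).mul_left
    (y ^ j * x ^ (n - j) * n.choose j)).congr fun k ↦ ?_
  ring

lemma eventually_mul_rpow_lt_one (c : ℝ) {α : ℝ} (hα : 0 < α) :
    ∀ᶠ q in 𝓝 (0 : ℝ), c * q ^ α < 1 := by
  have hlim : Tendsto (fun q : ℝ ↦ c * q ^ α) (𝓝 0) (𝓝 (c * 0 ^ α)) :=
    (Real.continuousAt_rpow_const 0 α (.inr hα.le)).tendsto.const_mul c
  rw [Real.zero_rpow hα.ne', mul_zero] at hlim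
  exact hlim.eventually_lt_const one_pos

lemma exists_mem_Ioc_mul_rpow_lt_one (c : ℝ) {α β : ℝ} (hα : 0 < α) (hβ : 0 < β) :
    ∃ q ∈ Ioc (0 : ℝ) 1, c * q ^ α < 1 ∧ c * q ^ β < 1 := by
  have hpos : ∀ᶠ q in 𝓝[>] (0 : ℝ), q ∈ Ioc (0 : ℝ) 1 := Ioc_mem_nhdsGT one_pos
  have hsmall : ∀ᶠ q in 𝓝[>] (0 : ℝ), c * q ^ α < 1 ∧ c * q ^ β < 1 :=
    ((eventually_mul_rpow_lt_one c hα).and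
      (eventually_mul_rpow_lt_one c hβ)).filter_mono nhdsWithin_le_nhds
  exact (hpos.and hsmall).exists

lemma mul_pow_rpow {t q : ℝ} (ht : 0 ≤ t) (hq : 0 ≤ q) (k : ℕ) (α : ℝ) :
    (t * q ^ k) ^ α = t ^ α * (q ^ α) ^ k := by
  rw [Real.mul_rpow ht (pow_nonneg hq k), Real.rpow_pow_comm hq]

lemma mul_pow_mem_Ioc {R : Type*} [Semiring R] [PartialOrder R] [IsStrictOrderedRing R]
    {t q T : R} (ht : t ∈ Ioc 0 T) (hq : q ∈ Ioc 0 1) (k : ℕ) : t * q ^ k ∈ Ioc 0 T :=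
  ⟨mul_pos ht.1 (pow_pos hq.1 k),
    (mul_le_of_le_one_right ht.1.le (pow_le_one₀ hq.1.le hq.2)).trans ht.2⟩

lemma one_le_abs_log {t : ℝ} (ht : t ∈ Ioc 0 (Real.exp (-1))) : 1 ≤ |Real.log t| :=
  le_abs.2 (.inr (le_neg.2 ((Real.log_le_iff_le_exp ht.1).2 ht.2)))

lemma abs_log_mul_pow_le {t q : ℝ} (ht : 1 ≤ |Real.log t|) (hq : q ≠ 0) (k : ℕ) :
    |Real.log (t * q ^ k)| ≤ (1 + k * |Real.log q|) * |Real.log t| := by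
  have ht₀ : t ≠ 0 := by
    rintro rfl
    norm_num at ht
  calc |Real.log (t * q ^ k)| = |Real.log t + k * Real.log q| := by
        rw [Real.log_mul ht₀ (pow_ne_zero k hq), Real.log_pow]
    _ ≤ |Real.log t| + k * |Real.log q| := by
        simpa only [abs_mul, Nat.abs_cast] using abs_add_le (Real.log t) (k * Real.log q)
    _ ≤ |Real.log t| + k * |Real.log q| * |Real.log t| := by
        grw [← le_mul_of_one_le_right (by positivity) ht]
    _ = (1 + k * |Real.log q|) * |Real.log t| := by ring

lemma abs_log_mul_pow_pow_add_one_le {t q : ℝ} (ht : 1 ≤ |Real.log t|) (hq : q ≠ 0) (n k : ℕ) :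
    |Real.log (t * q ^ k)| ^ n + 1 ≤ (1 + k * |Real.log q|) ^ n * (|Real.log t| ^ n + 1) := by
  have hfactor : 1 ≤ (1 + k * |Real.log q|) ^ n :=
    one_le_pow₀ (le_add_of_nonneg_right (by positivity))
  calc |Real.log (t * q ^ k)| ^ n + 1
      ≤ ((1 + k * |Real.log q|) * |Real.log t|) ^ n + (1 + k * |Real.log q|) ^ n := by
        gcongr
        exact abs_log_mul_pow_le ht hq k
    _ = (1 + k * |Real.log q|) ^ n * (|Real.log t| ^ n + 1) := by
        rw [mul_pow, mul_add_one]

/-- The constant `∑ (1 + (k + 1) |log q|)^n r^k` produced by iterating along a geometric sequence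
of ratio `q`, where `r` is the decay rate of the main term. It has the junk value `0` when the
series diverges, so it is only meaningful for `|r| < 1`. -/
noncomputable def logWeightSeries (n : ℕ) (q r : ℝ) : ℝ :=
  ∑' k : ℕ, (1 + (k + 1 : ℕ) * |Real.log q|) ^ n * r ^ k

lemma hasSum_logWeightSeries (n : ℕ) (q : ℝ) {r : ℝ} (hr : |r| < 1) :
    HasSum (fun k : ℕ ↦ (1 + (k + 1 : ℕ) * |Real.log q|) ^ n * r ^ k) (logWeightSeries n q r) := by
  refine Summable.hasSum ((summable_add_mul_pow_mul_geometric hr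
    (1 + |Real.log q|) |Real.log q| n).congr fun k ↦ ?_)
  push_cast
  ring

lemma logWeightSeries_pos (n : ℕ) (q : ℝ) {r : ℝ} (hr₀ : 0 ≤ r) (hr₁ : r < 1) :
    0 < logWeightSeries n q r :=
  (hasSum_logWeightSeries n q ((abs_of_nonneg hr₀).trans_lt hr₁)).summable.tsum_pos
    (fun k ↦ by positivity) 0 (by positivity)

lemma le_logWeightSeries_of_le_mul_add {h : ℝ → ℝ} {c q α β A B : ℝ} {n : ℕ} (hc : 0 ≤ c)
    (hq : q ∈ Ioc (0 : ℝ) 1) (hα : c * q ^ α < 1) (hβ : c * q ^ β < 1) (hA : 0 ≤ A)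
    (hstep : ∀ t ∈ Ioc 0 (Real.exp (-1)), ∀ ε ∈ Ioc 0 (Real.exp (-1)),
      h t ≤ c * h ε + A * t ^ α * (|Real.log ε| ^ n + 1))
    (hbound : ∀ t ∈ Ioc 0 (Real.exp (-1)), h t ≤ B * t ^ β)
    {t : ℝ} (ht : t ∈ Ioc 0 (Real.exp (-1))) :
    h t ≤ A * logWeightSeries n q (c * q ^ α) * t ^ α * (|Real.log t| ^ n + 1) := by
  have ht₀ : 0 ≤ t := ht.1.le
  have hq₀ : 0 ≤ q := hq.1.le
  have hrate (γ : ℝ) : 0 ≤ c * q ^ γ := by positivity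
  set W := |Real.log t| ^ n + 1
  have hrec (k : ℕ) : h (t * q ^ k) ≤ c * h (t * q ^ (k + 1)) +
      A * (t ^ α * (q ^ α) ^ k) * ((1 + (k + 1 : ℕ) * |Real.log q|) ^ n * W) := by
    refine (hstep _ (mul_pow_mem_Ioc ht hq k) _ (mul_pow_mem_Ioc ht hq (k + 1))).trans ?_
    rw [mul_pow_rpow ht₀ hq₀]
    gcongr
    exact abs_log_mul_pow_pow_add_one_le (one_le_abs_log ht) hq.1.ne' n (k + 1)
  have hrem (N : ℕ) : c ^ N * h (t * q ^ N) ≤ B * t ^ β * (c * q ^ β) ^ N := by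
    calc c ^ N * h (t * q ^ N) ≤ c ^ N * (B * (t * q ^ N) ^ β) := by
          gcongr
          exact hbound _ (mul_pow_mem_Ioc ht hq N)
      _ = B * t ^ β * (c * q ^ β) ^ N := by
          rw [mul_pow_rpow ht₀ hq₀]
          ring
  have hrem_lim : Tendsto (fun N : ℕ ↦ B * t ^ β * (c * q ^ β) ^ N) atTop (𝓝 0) := by
    simpa only [mul_zero] using
      (tendsto_pow_atTop_nhds_zero_of_lt_one (hrate β) hβ).const_mul (B * t ^ β)
  have hsum := (hasSum_logWeightSeries n q
    ((abs_of_nonneg (hrate α)).trans_lt hα)).mul_left (A * t ^ α * W)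
  calc h t = h (t * q ^ 0) := by rw [pow_zero, mul_one]
    _ ≤ A * t ^ α * W * logWeightSeries n q (c * q ^ α) := by
        refine le_of_le_mul_succ_add_of_hasSum (a := fun k ↦ h (t * q ^ k)) hc hrec hrem hrem_lim
          (hsum.congr_fun fun k ↦ ?_)
        ring
    _ = A * logWeightSeries n q (c * q ^ α) * t ^ α * W := by ring

theorem dyadic_iteration_general {c α β : ℝ} (hc : 0 ≤ c) (hα : 0 < α) (hβ : 0 < β) (n : ℕ) :
    ∃ C : ℝ, 0 < C ∧ ∀ A : ℝ, 0 ≤ A → ∀ (B : ℝ) (h : ℝ → ℝ),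
      (∀ t ∈ Ioc 0 (Real.exp (-1)), ∀ ε ∈ Ioc 0 (Real.exp (-1)),
        h t ≤ c * h ε + A * t ^ α * (|Real.log ε| ^ n + 1)) →
      (∀ t ∈ Ioc 0 (Real.exp (-1)), h t ≤ B * t ^ β) →
      ∀ t ∈ Ioc 0 (Real.exp (-1)), h t ≤ A * C * t ^ α * (|Real.log t| ^ n + 1) := by
  obtain ⟨q, hq, hqα, hqβ⟩ := exists_mem_Ioc_mul_rpow_lt_one c hα hβ
  have hrate : 0 ≤ c * q ^ α := mul_nonneg hc (Real.rpow_nonneg hq.1.le α)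
  exact ⟨logWeightSeries n q (c * q ^ α), logWeightSeries_pos n q hrate hqα,
    fun A hA B h hstep hbound t ht ↦
      le_logWeightSeries_of_le_mul_add hc hq hqα hqβ hA hstep hbound ht⟩

/-- Dyadic iteration lemma: if `h : (0,∞) → [0,∞)` satisfies
`h(t) ≤ 2 h(ε) + A t^{1/m} (|ln ε|^{d-m} + 1)` for all `t > 0`, `ε ∈ (0, e⁻¹]`, and
`h(t) ≤ B t^{1/d}` for all `t > 0`, then `h(t) ≤ C t^{1/m} (|ln t|^{d-m} + 1)` on `(0, e⁻¹]`
for a constant `C` depending only on `m`, `d` and `A`. -/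
theorem dyadic_iteration (m d : ℕ) (hm : 1 ≤ m) (hmd : m ≤ d) (A : ℝ) (hA : 0 < A) :
    ∃ C : ℝ, 0 < C ∧
      ∀ (B : ℝ), 0 < B →
        ∀ h : ℝ → ℝ, (∀ t : ℝ, 0 < t → 0 ≤ h t) →
          (∀ t : ℝ, 0 < t → ∀ ε : ℝ, 0 < ε → ε ≤ Real.exp (-1) →
            h t ≤ 2 * h ε + A * t ^ ((1 : ℝ) / m) * (|Real.log ε| ^ (d - m) + 1)) →
          (∀ t : ℝ, 0 < t → h t ≤ B * t ^ ((1 : ℝ) / d)) →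
          ∀ t : ℝ, 0 < t → t ≤ Real.exp (-1) →
            h t ≤ C * t ^ ((1 : ℝ) / m) * (|Real.log t| ^ (d - m) + 1) := by
  obtain ⟨C, hC, hmain⟩ := dyadic_iteration_general zero_le_two
    (one_div_pos.2 (Nat.cast_pos.2 hm)) (one_div_pos.2 (Nat.cast_pos.2 (hm.trans hmd))) (d - m)
  exact ⟨A * C, mul_pos hA hC, fun B _ h _ hstep hbound t ht hte ↦
    hmain A hA.le B h (fun s hs ε hε ↦ hstep s hs.1 ε hε.1 hε.2) (fun s hs ↦ hbound s hs.1) t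
      ⟨ht, hte⟩⟩
end
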